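/- Let n = 2t be an even integer with n ≥ 6, let s be an integer with 2 ≤ s ≤ 3^t − 1 (i.e. s ∉ {1, 3^t, 3^t + 1}), and let W_1, …, W_s be pairwise disjoint t-dimensional F_3-linear subspaces of F_3^n, with f the associated characteristic function. Then for all pairwise distinct w_1, w_2, w_3 ∈ F_3^n with w_1 + w_2 + w_3 = 0, one has Re(f̂(w_1)) + Re(f̂(w_2)) − 2·Re(f̂(w_3)) ≠ 3^n. -/

import Mathlib

open Matrix Finset

/-!
Let `W` be a partial spread of `s` subspaces of dimension `t` in a space `V` of dimension `2 t` over
a field of `q` elements, and let `N(φ)` count the members of `W` on which the linear form `φ`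
vanishes. By orthogonality of characters, the Walsh transform of the characteristic function of `W`
at `φ` is `[φ = 0] q ^ (2 t) + (ψ 1 - 1) (q ^ t N(φ) - s)`. Two members of `W` span `V`, so
`N(φ) ≤ 1` for `φ ≠ 0`, whereas `N(0) = s`. Since the transform is even, `φ₁ + φ₂ + φ₃ = 0` and
`0 < 1 - Re (ψ 1) ≤ 3 / 2`, the value `q ^ (2 t)` (which is nonzero, so that the `φᵢ` are not all
zero) would force `s = N(φ) ≤ 1` for some `φ ≠ 0` if `φ₁` or `φ₂` vanishes, `s ≥ q ^ t` if only
`φ₃` vanishes, and `q ^ t ≤ 3` if none vanishes.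
-/

open Module (Dual finrank)

section Walsh

variable {K V R : Type*} [Field K] [AddCommGroup V] [Module K V] [Fintype V] [CommRing R]

/-- The Walsh transform of `f : V → K` with respect to an additive character `ψ` of `K`. The
frequency is a linear form on `V`; on `ι → K` the vector `w` gives the form `x ↦ w ⬝ᵥ x`. -/
def walshTransform (ψ : AddChar K R) (f : V → K) (φ : Dual K V) : R :=
  ∑ x, ψ (f x - φ x)

theorem walshTransform_neg (ψ : AddChar K R) {f : V → K} (hf : f.Even) (φ : Dual K V) :
    walshTransform ψ f (-φ) = walshTransform ψ f φ :=
  Fintype.sum_equiv (Equiv.neg V) _ _ fun x ↦ by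
    rw [Equiv.neg_apply, hf, map_neg, LinearMap.neg_apply]

theorem sum_addChar_dual_of_ne_zero [IsDomain R] {ψ : AddChar K R} (hψ : ψ ≠ 1)
    {φ : Dual K V} (hφ : φ ≠ 0) : ∑ x, ψ (φ x) = 0 := by
  have hcomp : ψ.compAddMonoidHom φ.toAddMonoidHom ≠ 0 := by
    obtain ⟨a, ha⟩ := AddChar.ne_one_iff.mp hψ
    obtain ⟨x, rfl⟩ := LinearMap.surjective hφ a
    exact AddChar.ne_one_iff.mpr ⟨x, ha⟩
  exact AddChar.sum_eq_zero_of_ne_one hcomp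

open Classical in
theorem sum_addChar_dual [Fintype K] [IsDomain R] {ψ : AddChar K R} (hψ : ψ ≠ 1)
    (φ : Dual K V) :
    ∑ x, ψ (φ x) = if φ = 0 then (Fintype.card K : R) ^ finrank K V else 0 := by
  split_ifs with hφ
  · simp [hφ, Module.card_eq_pow_finrank (K := K) (V := V)]
  · exact sum_addChar_dual_of_ne_zero hψ hφ

open Classical in
theorem sum_submodule_addChar_dual [Fintype K] [IsDomain R] {ψ : AddChar K R} (hψ : ψ ≠ 1)
    (U : Submodule K V) (φ : Dual K V) :
    ∑ x : U, ψ (φ x) =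
      if φ ∈ U.dualAnnihilator then (Fintype.card K : R) ^ finrank K U else 0 := by
  have hrestrict : U.dualRestrict φ = 0 ↔ φ ∈ U.dualAnnihilator := by
    rw [← LinearMap.mem_ker, U.dualRestrict_ker_eq_dualAnnihilator]
  simpa only [hrestrict, Submodule.dualRestrict_apply] using
    sum_addChar_dual hψ (U.dualRestrict φ)

end Walsh

section PartialSpread

variable {K V κ : Type*} [Field K] [AddCommGroup V] [Module K V]

/-- The characteristic function of a family of subspaces: `1` on the nonzero vectors of its
members, and `0` elsewhere. -/
noncomputable def partialSpreadIndicator (W : κ → Submodule K V) : V → K :=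
  (⋃ k, (W k : Set V) \ {0}).indicator 1

theorem eq_partialSpreadIndicator {W : κ → Submodule K V} {f : V → K}
    (hf1 : ∀ x k, x ≠ 0 → x ∈ W k → f x = 1) (hf0 : ∀ x, (x = 0 ∨ ∀ k, x ∉ W k) → f x = 0) :
    f = partialSpreadIndicator W := by
  funext x
  by_cases hx : ∃ k, x ∈ W k ∧ x ≠ 0
  · obtain ⟨k, hk, hx0⟩ := hx
    have hmem : x ∈ ⋃ k, (W k : Set V) \ {0} := Set.mem_iUnion.mpr ⟨k, hk, hx0⟩
    rw [hf1 x k hx0 hk, partialSpreadIndicator, Set.indicator_of_mem hmem, Pi.one_apply]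
  · rw [partialSpreadIndicator, Set.indicator_of_notMem (by simpa using hx)]
    exact hf0 x (by grind)

theorem partialSpreadIndicator_even (W : κ → Submodule K V) :
    (partialSpreadIndicator W).Even := fun x ↦ by
  classical
  have hmem : -x ∈ ⋃ k, (W k : Set V) \ {0} ↔ x ∈ ⋃ k, (W k : Set V) \ {0} := by simp
  simp only [partialSpreadIndicator, Set.indicator_apply, hmem, Pi.one_apply]

variable [Fintype κ]

open Classical in
/-- The number of members of a family of subspaces on which the linear form `φ` vanishes. -/
noncomputable def annihilatedCount (W : κ → Submodule K V) (φ : Dual K V) : ℕ :=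
  #{k | φ ∈ (W k).dualAnnihilator}

theorem annihilatedCount_zero (W : κ → Submodule K V) :
    annihilatedCount W 0 = Fintype.card κ := by
  simp [annihilatedCount]

theorem annihilatedCount_le_one [FiniteDimensional K V] {W : κ → Submodule K V}
    (hdisj : Pairwise (Function.onFun Disjoint W))
    (hdim : ∀ i j, i ≠ j → finrank K V ≤ finrank K (W i) + finrank K (W j))
    {φ : Dual K V} (hφ : φ ≠ 0) : annihilatedCount W φ ≤ 1 := by
  classical
  refine Finset.card_le_one.mpr fun i hi j hj ↦ by_contra fun hij ↦ hφ ?_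
  have hspan : W i ⊔ W j = ⊤ := Submodule.eq_top_of_disjoint _ _ (hdim i j hij) (hdisj hij)
  have hmem : φ ∈ (W i ⊔ W j).dualAnnihilator := by
    rw [Submodule.dualAnnihilator_sup_eq]
    exact ⟨(mem_filter.mp hi).2, (mem_filter.mp hj).2⟩
  rwa [hspan, Submodule.dualAnnihilator_top, Submodule.mem_bot] at hmem

variable {R : Type*} [CommRing R]

theorem addChar_partialSpreadIndicator (ψ : AddChar K R) {W : κ → Submodule K V}
    (hdisj : Pairwise (Function.onFun Disjoint W)) (x : V) :
    ψ (partialSpreadIndicator W x) =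
      1 + (ψ 1 - 1) * ∑ k, ((W k : Set V) \ {0}).indicator 1 x := by
  have hpunctured : Set.PairwiseDisjoint (univ : Finset κ) fun k ↦ (W k : Set V) \ {0} := by
    intro i _ j _ hij
    refine Set.disjoint_left.mpr fun y hi hj ↦ hi.2 ?_
    exact Submodule.disjoint_def.mp (hdisj hij) y hi.1 hj.1
  have hsum := Finset.indicator_biUnion_apply univ _ hpunctured (f := (1 : V → R)) x
  simp only [mem_univ, Set.iUnion_true] at hsum
  rw [← hsum, partialSpreadIndicator]
  by_cases hx : x ∈ ⋃ k, (W k : Set V) \ {0}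
  · simp only [Set.indicator_of_mem hx, Pi.one_apply]
    ring
  · simp only [Set.indicator_of_notMem hx, AddChar.map_zero_eq_one, mul_zero, add_zero]

variable [Fintype V]

open Classical in
theorem sum_indicator_diff_zero_mul (U : Submodule K V) (g : V → R) :
    ∑ x, ((U : Set V) \ {0}).indicator 1 x * g x = ∑ x : U, g x - g 0 := by
  have hpoint (x : V) : ((U : Set V) \ {0}).indicator 1 x * g x =
      (if x ∈ U then g x else 0) - if x = 0 then g 0 else 0 := by
    by_cases hx0 : x = 0
    · simp [hx0]
    · simp [Set.indicator_apply, hx0]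
  have hsubtype : ∑ x : U, g x = ∑ x with x ∈ U, g x := (sum_subtype _ (by simp) g).symm
  rw [hsubtype, sum_filter, Fintype.sum_congr _ _ hpoint, sum_sub_distrib,
    sum_ite_eq' univ (0 : V) fun _ ↦ g 0, if_pos (mem_univ 0)]

open Classical in
theorem walshTransform_partialSpreadIndicator [Fintype K] [IsDomain R] {ψ : AddChar K R}
    (hψ : ψ ≠ 1) {W : κ → Submodule K V} (hdisj : Pairwise (Function.onFun Disjoint W)) {t : ℕ}
    (hdim : ∀ k, finrank K (W k) = t) (φ : Dual K V) :
    walshTransform ψ (partialSpreadIndicator W) φ =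
      (if φ = 0 then (Fintype.card K : R) ^ finrank K V else 0) +
        (ψ 1 - 1) * (Fintype.card K ^ t * annihilatedCount W φ - Fintype.card κ) := by
  have hmember (k : κ) : ∑ x, ((W k : Set V) \ {0}).indicator 1 x * ψ ((-φ) x) =
      (if φ ∈ (W k).dualAnnihilator then (Fintype.card K : R) ^ t else 0) - 1 := by
    rw [sum_indicator_diff_zero_mul, sum_submodule_addChar_dual hψ, map_zero,
      AddChar.map_zero_eq_one, hdim, neg_mem_iff]
  calc walshTransform ψ (partialSpreadIndicator W) φ
      = ∑ x, (1 + (ψ 1 - 1) * ∑ k, ((W k : Set V) \ {0}).indicator 1 x) * ψ ((-φ) x) := by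
        simp only [walshTransform, sub_eq_add_neg, AddChar.map_add_eq_mul,
          addChar_partialSpreadIndicator ψ hdisj, LinearMap.neg_apply]
    _ = ∑ x, ψ ((-φ) x) +
          (ψ 1 - 1) * ∑ k, ∑ x, ((W k : Set V) \ {0}).indicator 1 x * ψ ((-φ) x) := by
        rw [sum_comm]
        simp only [add_mul, one_mul, sum_add_distrib, mul_assoc, sum_mul, mul_sum]
    _ = _ := by
        simp only [sum_addChar_dual hψ, neg_eq_zero, hmember, sum_sub_distrib, annihilatedCount,
          natCast_card_filter, mul_sum, mul_ite, mul_one, mul_zero, sum_const, card_univ,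
          nsmul_eq_mul]

end PartialSpread

theorem addChar_ne_one_of_re_lt_one {A : Type*} [AddMonoid A] {ψ : AddChar A ℂ} {a : A}
    (hψ : (ψ a).re < 1) : ψ ≠ 1 := by
  rintro rfl
  simp at hψ

section RealPart

variable {K V κ : Type*} [Field K] [Fintype K] [AddCommGroup V] [Module K V] [Fintype V]
  {ψ : AddChar K ℂ} {W : κ → Submodule K V} {t : ℕ}

open Classical in
theorem re_walshTransform_partialSpreadIndicator [Fintype κ] (hψ : ψ ≠ 1)
    (hdisj : Pairwise (Function.onFun Disjoint W)) (hdim : ∀ k, finrank K (W k) = t)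
    (φ : Dual K V) :
    (walshTransform ψ (partialSpreadIndicator W) φ).re =
      (if φ = 0 then (Fintype.card K : ℝ) ^ finrank K V else 0) -
        (1 - (ψ 1).re) * (Fintype.card K ^ t * annihilatedCount W φ - Fintype.card κ) := by
  have hreal : walshTransform ψ (partialSpreadIndicator W) φ =
      ((if φ = 0 then (Fintype.card K : ℝ) ^ finrank K V else 0 : ℝ) : ℂ) + (ψ 1 - 1) *
        ((Fintype.card K ^ t * annihilatedCount W φ - Fintype.card κ : ℝ) : ℂ) := by
    rw [walshTransform_partialSpreadIndicator hψ hdisj hdim]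
    split_ifs <;> push_cast <;> rfl
  rw [hreal, Complex.add_re, Complex.re_mul_ofReal, Complex.ofReal_re, Complex.sub_re,
    Complex.one_re]
  ring

theorem re_walshTransform_zero_sub_re_walshTransform [Fintype κ] (hψ : ψ ≠ 1)
    (hdisj : Pairwise (Function.onFun Disjoint W)) (hdim : ∀ k, finrank K (W k) = t)
    {φ : Dual K V} (hφ : φ ≠ 0) :
    (walshTransform ψ (partialSpreadIndicator W) 0).re -
        (walshTransform ψ (partialSpreadIndicator W) φ).re =
      Fintype.card K ^ finrank K V - (1 - (ψ 1).re) *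
        (Fintype.card K ^ t * (Fintype.card κ - annihilatedCount W φ)) := by
  simp only [re_walshTransform_partialSpreadIndicator hψ hdisj hdim, if_true, if_neg hφ,
    annihilatedCount_zero]
  ring

theorem re_walshTransform_zero_sub_re_walshTransform_ne [Fintype κ] (hψ : (ψ 1).re < 1)
    (hV : finrank K V ≤ 2 * t) (hs : 2 ≤ Fintype.card κ)
    (hdisj : Pairwise (Function.onFun Disjoint W)) (hdim : ∀ k, finrank K (W k) = t)
    (φ : Dual K V) :
    (walshTransform ψ (partialSpreadIndicator W) 0).re -
      (walshTransform ψ (partialSpreadIndicator W) φ).re ≠ Fintype.card K ^ finrank K V := by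
  have hK : (0 : ℝ) < Fintype.card K := Nat.cast_pos.mpr Fintype.card_pos
  rcases eq_or_ne φ 0 with rfl | hφ
  · rw [sub_self]
    positivity
  have hcount : annihilatedCount W φ ≤ 1 :=
    annihilatedCount_le_one hdisj (fun i j _ ↦ by rw [hdim, hdim]; lia) hφ
  have hlt : (annihilatedCount W φ : ℝ) < Fintype.card κ := by
    exact_mod_cast hcount.trans_lt hs
  have hpos : 0 < (1 - (ψ 1).re) *
      ((Fintype.card K : ℝ) ^ t * (Fintype.card κ - annihilatedCount W φ)) :=
    mul_pos (sub_pos.mpr hψ) (mul_pos (pow_pos hK t) (sub_pos.mpr hlt))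
  rw [re_walshTransform_zero_sub_re_walshTransform (addChar_ne_one_of_re_lt_one hψ)
    hdisj hdim hφ]
  linarith

theorem two_mul_re_walshTransform_sub_re_walshTransform_zero_lt [Fintype κ]
    (hψ : (ψ 1).re ∈ Set.Ico (-1 / 2) 1) (hV : finrank K V = 2 * t)
    (hs : Fintype.card κ < Fintype.card K ^ t)
    (hdisj : Pairwise (Function.onFun Disjoint W)) (hdim : ∀ k, finrank K (W k) = t)
    (φ : Dual K V) :
    2 * ((walshTransform ψ (partialSpreadIndicator W) φ).re -
      (walshTransform ψ (partialSpreadIndicator W) 0).re) < Fintype.card K ^ finrank K V := by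
  have hK : (0 : ℝ) < Fintype.card K := Nat.cast_pos.mpr Fintype.card_pos
  rcases eq_or_ne φ 0 with rfl | hφ
  · rw [sub_self, mul_zero]
    positivity
  have hdiff := re_walshTransform_zero_sub_re_walshTransform
    (addChar_ne_one_of_re_lt_one hψ.2) hdisj hdim hφ
  have hpow : (Fintype.card K : ℝ) ^ finrank K V = Fintype.card K ^ t * Fintype.card K ^ t := by
    rw [hV, two_mul, pow_add]
  have hs' : (Fintype.card κ : ℝ) < Fintype.card K ^ t := by exact_mod_cast hs
  have hbound : (1 - (ψ 1).re) * (Fintype.card κ - annihilatedCount W φ) <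
      3 / 2 * (Fintype.card K : ℝ) ^ t :=
    calc (1 - (ψ 1).re) * (Fintype.card κ - annihilatedCount W φ)
        ≤ (1 - (ψ 1).re) * Fintype.card κ :=
          mul_le_mul_of_nonneg_left (sub_le_self _ (Nat.cast_nonneg _)) (sub_nonneg.mpr hψ.2.le)
      _ ≤ 3 / 2 * Fintype.card κ :=
          mul_le_mul_of_nonneg_right (by linarith [hψ.1]) (Nat.cast_nonneg _)
      _ < 3 / 2 * (Fintype.card K : ℝ) ^ t := by linarith
  have hmul := mul_lt_mul_of_pos_left hbound (pow_pos hK t)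
  linarith

theorem re_walshTransform_add_sub_two_mul_lt [Finite κ]
    (hψ : (ψ 1).re ∈ Set.Ico (-1 / 2) 1) (hV : finrank K V = 2 * t)
    (hq : 3 < Fintype.card K ^ t)
    (hdisj : Pairwise (Function.onFun Disjoint W)) (hdim : ∀ k, finrank K (W k) = t)
    {φ₁ φ₂ φ₃ : Dual K V} (h₁ : φ₁ ≠ 0) (h₂ : φ₂ ≠ 0) (h₃ : φ₃ ≠ 0) :
    (walshTransform ψ (partialSpreadIndicator W) φ₁).re +
      (walshTransform ψ (partialSpreadIndicator W) φ₂).re -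
      2 * (walshTransform ψ (partialSpreadIndicator W) φ₃).re < Fintype.card K ^ finrank K V := by
  have := Fintype.ofFinite κ
  have hq' : (3 : ℝ) < Fintype.card K ^ t := by exact_mod_cast hq
  have hcount : annihilatedCount W φ₃ ≤ 1 :=
    annihilatedCount_le_one hdisj (fun i j _ ↦ by rw [hdim, hdim]; lia) h₃
  have hcombination : 2 * (annihilatedCount W φ₃ : ℝ) - annihilatedCount W φ₁ -
      annihilatedCount W φ₂ ≤ 2 := by
    have hcount' : (annihilatedCount W φ₃ : ℝ) ≤ 1 := by exact_mod_cast hcount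
    have hnonneg (φ : Dual K V) : (0 : ℝ) ≤ annihilatedCount W φ := Nat.cast_nonneg _
    linarith [hnonneg φ₁, hnonneg φ₂]
  simp only [re_walshTransform_partialSpreadIndicator (addChar_ne_one_of_re_lt_one hψ.2)
    hdisj hdim, if_neg h₁, if_neg h₂, if_neg h₃]
  calc _ = (Fintype.card K : ℝ) ^ t * ((1 - (ψ 1).re) *
          (2 * annihilatedCount W φ₃ - annihilatedCount W φ₁ - annihilatedCount W φ₂)) := by ring
    _ ≤ (Fintype.card K : ℝ) ^ t * ((1 - (ψ 1).re) * 2) := by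
        have := sub_nonneg.mpr hψ.2.le
        gcongr
    _ < (Fintype.card K : ℝ) ^ t * Fintype.card K ^ t := by
        refine mul_lt_mul_of_pos_left ?_ (by linarith)
        linarith [hψ.1]
    _ = (Fintype.card K : ℝ) ^ finrank K V := by rw [hV, two_mul, pow_add]

theorem stmt12_general [Fintype κ] (hψ : (ψ 1).re ∈ Set.Ico (-1 / 2) 1) (hV : finrank K V = 2 * t)
    (hq : 3 < Fintype.card K ^ t) (hs : 2 ≤ Fintype.card κ)
    (hs2 : Fintype.card κ < Fintype.card K ^ t)
    (hdisj : Pairwise (Function.onFun Disjoint W)) (hdim : ∀ k, finrank K (W k) = t)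
    {φ₁ φ₂ φ₃ : Dual K V} (hsum : φ₁ + φ₂ + φ₃ = 0) :
    (walshTransform ψ (partialSpreadIndicator W) φ₁).re +
      (walshTransform ψ (partialSpreadIndicator W) φ₂).re -
      2 * (walshTransform ψ (partialSpreadIndicator W) φ₃).re ≠ Fintype.card K ^ finrank K V := by
  have hneg := walshTransform_neg ψ (partialSpreadIndicator_even W)
  have hne := re_walshTransform_zero_sub_re_walshTransform_ne hψ.2 hV.le hs hdisj hdim
  obtain rfl : φ₃ = -(φ₁ + φ₂) := eq_neg_of_add_eq_zero_right hsum
  rcases eq_or_ne φ₁ 0 with rfl | h₁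
  · rw [zero_add, hneg]
    exact fun h ↦ hne φ₂ (by linarith)
  rcases eq_or_ne φ₂ 0 with rfl | h₂
  · rw [add_zero, hneg]
    exact fun h ↦ hne φ₁ (by linarith)
  rcases eq_or_ne (φ₁ + φ₂) 0 with h₃ | h₃
  · obtain rfl : φ₂ = -φ₁ := eq_neg_of_add_eq_zero_right h₃
    rw [h₃, neg_zero, hneg, ← two_mul, ← mul_sub]
    exact (two_mul_re_walshTransform_sub_re_walshTransform_zero_lt hψ hV hs2 hdisj hdim φ₁).ne
  · exact (re_walshTransform_add_sub_two_mul_lt hψ hV hq hdisj hdim h₁ h₂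
      (neg_ne_zero.mpr h₃)).ne

end RealPart

theorem exp_pow_val_eq_stdAddChar {N : ℕ} [NeZero N] (a : ZMod N) :
    Complex.exp (2 * Real.pi * Complex.I / N) ^ a.val = ZMod.stdAddChar a := by
  rw [ZMod.stdAddChar_apply, ZMod.toCircle_apply, ← Complex.exp_nat_mul]
  ring_nf

theorem re_stdAddChar_one {N : ℕ} [NeZero N] :
    (ZMod.stdAddChar (1 : ZMod N)).re = Real.cos (2 * Real.pi / N) := by
  have h := ZMod.stdAddChar_coe (N := N) 1
  rw [Int.cast_one] at h
  rw [h, ← Complex.exp_ofReal_mul_I_re]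
  push_cast
  ring_nf

theorem re_stdAddChar_zmod_three_one : (ZMod.stdAddChar (1 : ZMod 3)).re = -1 / 2 := by
  have hangle : 2 * Real.pi / (3 : ℕ) = Real.pi - Real.pi / 3 := by
    push_cast
    ring
  rw [re_stdAddChar_one, hangle, Real.cos_pi_sub, Real.cos_pi_div_three]
  norm_num

theorem stmt12 (t n s : ℕ) (ht : n = 2 * t) (hn : 6 ≤ n) (hs : 2 ≤ s)
    (hs2 : s ≤ 3 ^ t - 1)
    (W : Fin s → Submodule (ZMod 3) (Fin n → ZMod 3))
    (hdim : ∀ k, Module.finrank (ZMod 3) (W k) = t)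
    (hdisj : ∀ i j, i ≠ j → W i ⊓ W j = ⊥)
    (f : (Fin n → ZMod 3) → ZMod 3)
    (hf1 : ∀ (x : Fin n → ZMod 3) (k : Fin s), x ≠ 0 → x ∈ W k → f x = 1)
    (hf0 : ∀ x : Fin n → ZMod 3, (x = 0 ∨ ∀ k, x ∉ W k) → f x = 0)
    (walsh : (Fin n → ZMod 3) → ℂ)
    (hwalsh : ∀ w : Fin n → ZMod 3, walsh w = ∑ x : Fin n → ZMod 3,
      Complex.exp (2 * Real.pi * Complex.I / 3) ^ ((f x - w ⬝ᵥ x).val))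
    :
    ∀ w1 w2 w3 : Fin n → ZMod 3, w1 ≠ w2 → w1 ≠ w3 → w2 ≠ w3 → w1 + w2 + w3 = 0 →
      (walsh w1).re + (walsh w2).re - 2 * (walsh w3).re ≠ 3 ^ n := by
  intro w1 w2 w3 _ _ _ hsum
  have hwalsh_eq (w : Fin n → ZMod 3) : walsh w = walshTransform ZMod.stdAddChar
      (partialSpreadIndicator W) (dotProductEquiv (ZMod 3) (Fin n) w) := by
    rw [hwalsh, ← eq_partialSpreadIndicator hf1 hf0]
    exact sum_congr rfl fun x _ ↦ exp_pow_val_eq_stdAddChar _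
  have hq : 3 ^ 3 ≤ 3 ^ t := Nat.pow_le_pow_right three_pos (by lia)
  simpa only [hwalsh_eq, ZMod.card, Module.finrank_fin_fun, Nat.cast_ofNat] using
    stmt12_general (ψ := ZMod.stdAddChar) (W := W) (t := t)
      (by rw [re_stdAddChar_zmod_three_one]; norm_num) (by simpa using ht)
      (by rw [ZMod.card]; lia) (by simpa using hs) (by rw [ZMod.card, Fintype.card_fin]; lia)
      (fun i j hij ↦ disjoint_iff.mpr (hdisj i j hij)) hdim
      (by rw [← map_add, ← map_add, hsum, map_zero])
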